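/- Let δ : 𝕃 → ℚ be the group homomorphism with δ(x⃗_i) = 1/p_i and δ(c⃗) = 1. If δ(ω⃗) ≠ 0 (i.e. 𝕃 is not Calabi-Yau), then the quotient group 𝕃/ℤω⃗ is finite and its cardinality equals the absolute value of (p_1 p_2 ⋯ p_n)·δ(ω⃗), that is, the absolute value of (n − d − 1)·p_1⋯p_n − Σ_{i=1}^n Π_{j ≠ i} p_j. -/

import Mathlib

/-- The determinant of the relation matrix. -/
theorem GL_det_aux (n : ℕ) (p : Fin n → ℕ) (hp : ∀ i, 0 < p i) (k : ℤ) :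
    (Matrix.fromBlocks (Matrix.diagonal fun i => (p i : ℤ)) (Matrix.of fun _ _ => -1)
      (Matrix.of fun _ _ => -1) (Matrix.of fun _ _ => k) :
        Matrix (Fin n ⊕ Unit) (Fin n ⊕ Unit) ℤ).det =
      k * ∏ i, (p i : ℤ) - ∑ i, ∏ j ∈ Finset.univ.erase i, (p j : ℤ) := by
  have hp' : ∀ i, (p i : ℚ) ≠ 0 := fun i => by exact_mod_cast (hp i).ne'
  have key : (Matrix.fromBlocks (Matrix.diagonal fun i => (p i : ℚ)) (Matrix.of fun _ _ => -1)
      (Matrix.of fun _ _ => -1) (Matrix.of fun _ _ => (k : ℚ)) :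
        Matrix (Fin n ⊕ Unit) (Fin n ⊕ Unit) ℚ).det =
      k * ∏ i, (p i : ℚ) - ∑ i, ∏ j ∈ Finset.univ.erase i, (p j : ℚ) := by
    let _ : Invertible (Matrix.diagonal fun i => (p i : ℚ)) :=
      ⟨Matrix.diagonal fun i => (p i : ℚ)⁻¹,
        by simp [Matrix.diagonal_mul_diagonal, hp'],
        by simp [Matrix.diagonal_mul_diagonal, hp']⟩
    have hinv : ⅟(Matrix.diagonal fun i => (p i : ℚ)) =
      Matrix.diagonal fun i => (p i : ℚ)⁻¹ := rfl
    rw [Matrix.det_fromBlocks₁₁, hinv, Matrix.det_diagonal, Matrix.det_unique]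
    rw [Matrix.sub_apply, Matrix.mul_apply]
    simp only [Matrix.mul_diagonal, Matrix.of_apply]
    rw [mul_sub, mul_comm, Finset.mul_sum]
    congr 1
    refine Finset.sum_congr rfl fun i _ => ?_
    rw [← Finset.mul_prod_erase Finset.univ _ (Finset.mem_univ i)]
    field_simp [hp' i]
  have h2 := Int.cast_det (R := ℚ)
    (Matrix.fromBlocks (Matrix.diagonal fun i => (p i : ℤ)) (Matrix.of fun _ _ => -1)
      (Matrix.of fun _ _ => -1) (Matrix.of fun _ _ => k) :
        Matrix (Fin n ⊕ Unit) (Fin n ⊕ Unit) ℤ)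
  have h3 : ((Matrix.fromBlocks (Matrix.diagonal fun i => (p i : ℤ)) (Matrix.of fun _ _ => -1)
      (Matrix.of fun _ _ => -1) (Matrix.of fun _ _ => k) :
        Matrix (Fin n ⊕ Unit) (Fin n ⊕ Unit) ℤ).map (fun x : ℤ => (x : ℚ))) =
      Matrix.fromBlocks (Matrix.diagonal fun i => (p i : ℚ)) (Matrix.of fun _ _ => -1)
      (Matrix.of fun _ _ => -1) (Matrix.of fun _ _ => (k : ℚ)) := by
    ext i j
    rcases i with i | i <;> rcases j with j | j <;>
      simp [Matrix.diagonal_apply]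
  have h4 := h2.trans ((congrArg Matrix.det h3).trans key)
  exact_mod_cast h4

/-- Lift of the generators of the total relation subgroup. -/
def GLvec (n : ℕ) (p : Fin n → ℕ) (k : ℤ) : Fin n ⊕ Unit → (Fin n → ℤ) × ℤ :=
  Sum.elim (fun i => (Pi.single i (p i : ℤ), -1)) (fun _ => (fun _ => -1, k))

theorem GL_index_aux (n : ℕ) (p : Fin n → ℕ) (hp : ∀ i, 0 < p i) (k : ℤ)
    (h0 : k * ∏ i, (p i : ℤ) - ∑ i, ∏ j ∈ Finset.univ.erase i, (p j : ℤ) ≠ 0) :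
    (AddSubgroup.closure (Set.range (GLvec n p k))).index =
      (k * ∏ i, (p i : ℤ) - ∑ i, ∏ j ∈ Finset.univ.erase i, (p j : ℤ)).natAbs := by
  let b : Module.Basis (Fin n ⊕ Unit) ℤ ((Fin n → ℤ) × ℤ) :=
    (Pi.basisFun ℤ (Fin n)).prod (Module.Basis.singleton Unit ℤ)
  have hM : b.toMatrix (GLvec n p k) =
      Matrix.fromBlocks (Matrix.diagonal fun i => (p i : ℤ)) (Matrix.of fun _ _ => -1)
      (Matrix.of fun _ _ => -1) (Matrix.of fun _ _ => k) := by
    ext i j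
    rcases i with i | i <;> rcases j with j | j <;>
      simp [b, GLvec, Module.Basis.toMatrix_apply, Matrix.diagonal_apply, Pi.single_apply]
    grind
  have hdet : b.det (GLvec n p k) =
      k * ∏ i, (p i : ℤ) - ∑ i, ∏ j ∈ Finset.univ.erase i, (p j : ℤ) := by
    rw [Module.Basis.det_apply, hM, GL_det_aux n p hp]
  have hli : LinearIndependent ℤ (GLvec n p k) := by
    rw [← hdet, Module.Basis.det_apply] at h0
    have := Matrix.linearIndependent_cols_of_det_ne_zero h0
    exact LinearIndependent.of_comp b.equivFun.toLinearMap this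
  have hN : AddSubgroup.closure (Set.range (GLvec n p k)) =
      (Submodule.span ℤ (Set.range (GLvec n p k))).toAddSubgroup :=
    (Submodule.span_int_eq_addSubgroupClosure _).symm
  rw [hN, ← hdet]
  have := Submodule.natAbs_det_basis_change b _ (Module.Basis.span hli)
  have h5 : ((↑) ∘ (Module.Basis.span hli) : Fin n ⊕ Unit → (Fin n → ℤ) × ℤ) = GLvec n p k := by
    ext1 i
    exact congrArg Subtype.val (Module.Basis.span_apply hli i)
  rw [h5] at this
  exact this.symm

/-- The subgroup of relations `p i • x⃗_i − c⃗` inside the free abelian group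
`(Fin n → ℤ) × ℤ` on the generators `x⃗_1, …, x⃗_n, c⃗`. -/
def GLrels (n : ℕ) (p : Fin n → ℕ) : AddSubgroup ((Fin n → ℤ) × ℤ) :=
  AddSubgroup.closure (Set.range fun i : Fin n => ((Pi.single i (p i : ℤ), -1) : (Fin n → ℤ) × ℤ))

/-- The grading group `𝕃 = ⟨x⃗_1, …, x⃗_n, c⃗⟩ / ⟨p_i x⃗_i − c⃗⟩`. -/
abbrev GLgroup (n : ℕ) (p : Fin n → ℕ) : Type :=
  ((Fin n → ℤ) × ℤ) ⧸ GLrels n p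

/-- The generator `x⃗_i` of `𝕃`. -/
def GLx (n : ℕ) (p : Fin n → ℕ) (i : Fin n) : GLgroup n p :=
  QuotientAddGroup.mk (Pi.single i 1, 0)

/-- The generator `c⃗` of `𝕃`. -/
def GLc (n : ℕ) (p : Fin n → ℕ) : GLgroup n p :=
  QuotientAddGroup.mk (0, 1)

/-- The positive cone `𝕃_+`: the submonoid of `𝕃` generated by `x⃗_1, …, x⃗_n` and `c⃗`. -/
def GLplus (n : ℕ) (p : Fin n → ℕ) : AddSubmonoid (GLgroup n p) :=
  AddSubmonoid.closure ({GLc n p} ∪ Set.range (GLx n p))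

/-- The partial order relation on `𝕃`: `x⃗ ≤ y⃗` iff `y⃗ − x⃗ ∈ 𝕃_+`. -/
def GLle (n : ℕ) (p : Fin n → ℕ) (x y : GLgroup n p) : Prop :=
  y - x ∈ GLplus n p

/-- The dualizing element `ω⃗ = (n − d − 1) c⃗ − Σ_i x⃗_i` of `𝕃`. -/
def GLomega (d n : ℕ) (p : Fin n → ℕ) : GLgroup n p :=
  ((n : ℤ) - d - 1) • GLc n p - ∑ i, GLx n p i

/-- If `δ(ω⃗) ≠ 0` (where `δ : 𝕃 → ℚ` is the group homomorphism with
`δ(x⃗_i) = 1/p_i` and `δ(c⃗) = 1`), then `𝕃/ℤω⃗` is finite of cardinality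
`|(n − d − 1)·p_1⋯p_n − Σ_i Π_{j ≠ i} p_j| = |(p_1⋯p_n)·δ(ω⃗)|`. -/
theorem card_quotient_of_not_CY (d n : ℕ) (hd : 1 ≤ d) (p : Fin n → ℕ)
    (hp : ∀ i, 0 < p i)
    (δ : GLgroup n p →+ ℚ) (hδx : ∀ i, δ (GLx n p i) = 1 / (p i : ℚ))
    (hδc : δ (GLc n p) = 1) (hCY : δ (GLomega d n p) ≠ 0) :
    Finite (GLgroup n p ⧸ AddSubgroup.zmultiples (GLomega d n p)) ∧
      Nat.card (GLgroup n p ⧸ AddSubgroup.zmultiples (GLomega d n p)) =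
        (((n : ℤ) - d - 1) * ∏ i, (p i : ℤ) -
          ∑ i, ∏ j ∈ Finset.univ.erase i, (p j : ℤ)).natAbs := by
  have hp' : ∀ i, (p i : ℚ) ≠ 0 := fun i => by exact_mod_cast (hp i).ne'
  have h0 : ((n : ℤ) - d - 1) * ∏ i, (p i : ℤ) -
      ∑ i, ∏ j ∈ Finset.univ.erase i, (p j : ℤ) ≠ 0 := by
    intro h
    apply hCY
    have hq : ((n : ℚ) - d - 1) * ∏ i, (p i : ℚ) -
      ∑ i, ∏ j ∈ Finset.univ.erase i, (p j : ℚ) = 0 := by exact_mod_cast h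
    have hP : ∏ i, (p i : ℚ) ≠ 0 := Finset.prod_ne_zero_iff.2 fun i _ => hp' i
    have hs : ∑ i, ∏ j ∈ Finset.univ.erase i, (p j : ℚ) =
        (∑ i, 1 / (p i : ℚ)) * ∏ i, (p i : ℚ) := by
      rw [Finset.sum_mul]
      refine Finset.sum_congr rfl fun i _ => ?_
      rw [← Finset.mul_prod_erase Finset.univ _ (Finset.mem_univ i)]
      field_simp [hp' i]
    rw [hs, ← sub_mul] at hq
    have := (mul_eq_zero.1 hq).resolve_right hP
    rw [GLomega, map_sub, map_zsmul, map_sum, hδc]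
    simp only [hδx]
    simpa using this
  have hidx := GL_index_aux n p hp ((n : ℤ) - d - 1) h0
  have hw : GLomega d n p = QuotientAddGroup.mk' (GLrels n p) (fun _ => -1, (n : ℤ) - d - 1) := by
    have hv : ((fun _ => -1, (n : ℤ) - d - 1) : (Fin n → ℤ) × ℤ) =
        ((n : ℤ) - d - 1) • ((0, 1) : (Fin n → ℤ) × ℤ) - ∑ i, (Pi.single i 1, 0) := by
      refine Prod.ext ?_ ?_
      · funext j
        simp [Prod.fst_sum, Finset.sum_apply, Pi.single_apply]
      · simp [Prod.snd_sum]
    rw [hv, map_sub, map_zsmul, map_sum]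
    rfl
  have hcomap : (AddSubgroup.zmultiples (GLomega d n p)).comap (QuotientAddGroup.mk' (GLrels n p))
      = AddSubgroup.closure (Set.range (GLvec n p ((n : ℤ) - d - 1))) := by
    rw [hw, ← AddMonoidHom.map_zmultiples, AddSubgroup.comap_map_eq, QuotientAddGroup.ker_mk',
      GLvec, Set.Sum.elim_range, AddSubgroup.closure_union, Set.range_const,
      ← AddSubgroup.zmultiples_eq_closure, sup_comm]
    rfl
  have hcard : Nat.card (GLgroup n p ⧸ AddSubgroup.zmultiples (GLomega d n p)) =
        (((n : ℤ) - d - 1) * ∏ i, (p i : ℤ) -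
          ∑ i, ∏ j ∈ Finset.univ.erase i, (p j : ℤ)).natAbs := by
    rw [← hidx, ← hcomap,
      AddSubgroup.index_comap_of_surjective _ (QuotientAddGroup.mk'_surjective _)]
    rfl
  refine ⟨Nat.finite_of_card_ne_zero ?_, hcard⟩
  rw [hcard]
  exact Int.natAbs_ne_zero.2 h0
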